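/- arXiv:1805.06778 — 2 statements merged into one kernel-verified Lean document; each statement's English description precedes it below -/
import Mathlib

section
/- Let X be a real Banach space with a Schauder basis (e_n). Then the following are equivalent: (a) (e_n) is reverse partially greedy, i.e., there exists a constant C such that ‖x − G_m(x)‖ ≤ C·σ̃^R_m(x) for all x ∈ X, all m ∈ ℕ, and every greedy ordering for x; (b) (e_n) is quasi-greedy and reverse conservative. -/
open Filter Topology

/-- A Schauder basis of a real normed space `X`, given by basis vectors `e n` together with
biorthogonal (coordinate) functionals `f n`, such that every `x` is the limit of its
partial-sum expansion `∑_{n < N} f n x • e n`. -/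
structure SchauderBasisSys (X : Type*) [NormedAddCommGroup X] [NormedSpace ℝ X] where
  e : ℕ → X
  f : ℕ → X →L[ℝ] ℝ
  biorth : ∀ m n : ℕ, f m (e n) = if m = n then (1 : ℝ) else 0
  expansion : ∀ x : X,
    Filter.Tendsto (fun N : ℕ => ∑ n ∈ Finset.range N, f n x • e n) Filter.atTop (nhds x)

namespace SchauderBasisSys

variable {X : Type*} [NormedAddCommGroup X] [NormedSpace ℝ X]

/-- The coordinate projection onto a finite set `A` of indices: `P_A x = ∑_{i ∈ A} e_i^*(x) e_i`. -/
noncomputable def P (S : SchauderBasisSys X) (A : Finset ℕ) (x : X) : X :=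
  ∑ i ∈ A, S.f i x • S.e i

/-- The indicator vector `1_A = ∑_{i ∈ A} e_i`. -/
noncomputable def ind (S : SchauderBasisSys X) (A : Finset ℕ) : X :=
  ∑ i ∈ A, S.e i

/-- A greedy ordering for `x`: an injection `ρ : ℕ → ℕ` whose range contains the support of `x`
and which rearranges the coordinates of `x` in nonincreasing order of absolute value. -/
def IsGreedyOrdering (S : SchauderBasisSys X) (x : X) (ρ : ℕ → ℕ) : Prop :=
  Function.Injective ρ ∧ (∀ n : ℕ, S.f n x ≠ 0 → n ∈ Set.range ρ) ∧
    ∀ j k : ℕ, j ≤ k → |S.f (ρ k) x| ≤ |S.f (ρ j) x|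

/-- The greedy set `Λ_m(x) = {ρ(0), …, ρ(m-1)}` associated to a greedy ordering `ρ`. -/
def Lam (ρ : ℕ → ℕ) (m : ℕ) : Finset ℕ := (Finset.range m).image ρ

/-- The `m`-th greedy approximation `G_m(x) = ∑_{j < m} e_{ρ(j)}^*(x) e_{ρ(j)}`. -/
noncomputable def G (S : SchauderBasisSys X) (x : X) (ρ : ℕ → ℕ) (m : ℕ) : X :=
  ∑ j ∈ Finset.range m, S.f (ρ j) x • S.e (ρ j)

/-- Quasi-greedy: `‖G_m(x)‖ ≤ K ‖x‖` uniformly. -/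
def QuasiGreedy (S : SchauderBasisSys X) : Prop :=
  ∃ K : ℝ, ∀ (x : X) (ρ : ℕ → ℕ) (m : ℕ),
    S.IsGreedyOrdering x ρ → ‖S.G x ρ m‖ ≤ K * ‖x‖

/-- Conservative: `‖1_A‖ ≤ Γ ‖1_B‖` whenever `|A| ≤ |B|` and `max A < min B`. -/
def Conservative (S : SchauderBasisSys X) : Prop :=
  ∃ Γ : ℝ, ∀ A B : Finset ℕ, A.card ≤ B.card →
    (∀ i ∈ A, ∀ j ∈ B, i < j) → ‖S.ind A‖ ≤ Γ * ‖S.ind B‖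

/-- Reverse conservative: `‖1_A‖ ≤ Γ ‖1_B‖` whenever `|A| ≤ |B|` and `max B < min A`. -/
def ReverseConservative (S : SchauderBasisSys X) : Prop :=
  ∃ Γ : ℝ, ∀ A B : Finset ℕ, A.card ≤ B.card →
    (∀ i ∈ A, ∀ j ∈ B, j < i) → ‖S.ind A‖ ≤ Γ * ‖S.ind B‖

/-- Partially greedy: `‖x - G_m(x)‖ ≤ C ‖∑_{n ≥ m} e_n^*(x) e_n‖ = C ‖x - P_{[0,m)}(x)‖`. -/
def PartiallyGreedy (S : SchauderBasisSys X) : Prop :=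
  ∃ C : ℝ, ∀ (x : X) (ρ : ℕ → ℕ) (m : ℕ), S.IsGreedyOrdering x ρ →
    ‖x - S.G x ρ m‖ ≤ C * ‖x - S.P (Finset.range m) x‖

/-- Almost greedy: `‖x - G_m(x)‖ ≤ C inf{‖x - P_A(x)‖ : |A| ≤ m}`. -/
def AlmostGreedy (S : SchauderBasisSys X) : Prop :=
  ∃ C : ℝ, ∀ (x : X) (ρ : ℕ → ℕ) (m : ℕ) (A : Finset ℕ), S.IsGreedyOrdering x ρ →
    A.card ≤ m → ‖x - S.G x ρ m‖ ≤ C * ‖x - S.P A x‖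

end SchauderBasisSys

open SchauderBasisSys

/-!
A greedy ordering matters only through the finite sets `Λ_m(x)`, and these are exactly the sets
carrying the largest coefficients. So suppose `Λ` carries the largest coefficients of `x`, each of
modulus at least `t`, and let `A` lie to the right of `Λ` with `|A| ≤ |Λ|`; the coefficients of `x`
on `A` have modulus at most `t`. Then `‖P_A x‖ ≤ 2 t Γ ‖1_Λ‖` by reverse conservativeness. On the
other hand `t ‖1_Λ‖ ≤ 4 K² ‖x - P_A x‖`, because `Λ` still carries the largest coefficients of
`x - P_A x`: dividing the coefficients on `Λ` by their moduli costs a factor `2 K / t` (layer cake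
over the level sets of the moduli), and changing the resulting signs costs a factor `2 K`.
Conversely, reverse conservativeness is the reverse partially greedy estimate for `1_B + 1_A`.
-/

section LayerCake

variable {ι E : Type*} [SeminormedAddCommGroup E] [NormedSpace ℝ E]

theorem norm_sum_smul_le_of_superlevel (v : ι → E) {A : Finset ι} {a : ι → ℝ} {t M : ℝ}
    (ht : 0 ≤ t) (ha : ∀ i ∈ A, 0 ≤ a i) (hat : ∀ i ∈ A, a i ≤ t)
    (hM : ∀ s : ℝ, ‖∑ i ∈ A with s < a i, v i‖ ≤ M) :
    ‖∑ i ∈ A, a i • v i‖ ≤ t * M := by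
  induction A using Finset.strongInduction generalizing a t with
  | H A ih =>
    rcases A.eq_empty_or_nonempty with rfl | hA
    · simpa using mul_nonneg ht ((norm_nonneg _).trans (hM 0))
    obtain ⟨i₀, hi₀, hmin⟩ := A.exists_min_image a hA
    have hbottom : ‖a i₀ • ∑ i ∈ A, v i‖ ≤ a i₀ * M := by
      have hall : {i ∈ A | a i₀ - 1 < a i} = A :=
        Finset.filter_true_of_mem fun i hi => by linarith [hmin i hi]
      rw [norm_smul, Real.norm_of_nonneg (ha i₀ hi₀)]
      exact mul_le_mul_of_nonneg_left (hall ▸ hM (a i₀ - 1)) (ha i₀ hi₀)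
    have htop : ‖∑ i ∈ A with a i₀ < a i, (a i - a i₀) • v i‖ ≤ (t - a i₀) * M := by
      have hssubset : {i ∈ A | a i₀ < a i} ⊂ A :=
        Finset.filter_ssubset.2 ⟨i₀, hi₀, lt_irrefl (a i₀)⟩
      refine ih _ hssubset (sub_nonneg.2 (hat i₀ hi₀))
        (fun i hi => sub_nonneg.2 (Finset.mem_filter.1 hi).2.le)
        (fun i hi => sub_le_sub_right (hat i (Finset.mem_filter.1 hi).1) _) fun s => ?_
      have hlevel : {i ∈ {i ∈ A | a i₀ < a i} | s < a i - a i₀} =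
          {i ∈ A | max s 0 + a i₀ < a i} := by
        ext i
        simp only [Finset.mem_filter, ← lt_sub_iff_add_lt, max_lt_iff, sub_pos]
        tauto
      exact hlevel ▸ hM _
    have hsplit : ∑ i ∈ A, a i • v i =
        a i₀ • ∑ i ∈ A, v i + ∑ i ∈ A with a i₀ < a i, (a i - a i₀) • v i := by
      have hlt (i : ι) (hi : i ∈ A) (hne : (a i - a i₀) • v i ≠ 0) : a i₀ < a i :=
        (hmin i hi).lt_of_ne fun heq => hne (by rw [heq, sub_self, zero_smul])
      rw [Finset.sum_filter_of_ne hlt, Finset.smul_sum, ← Finset.sum_add_distrib]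
      exact Finset.sum_congr rfl fun i _ => by module
    calc ‖∑ i ∈ A, a i • v i‖
        ≤ ‖a i₀ • ∑ i ∈ A, v i‖ + ‖∑ i ∈ A with a i₀ < a i, (a i - a i₀) • v i‖ :=
          hsplit ▸ norm_add_le _ _
      _ ≤ t * M := by linarith

theorem norm_sum_smul_le_of_abs_le (v : ι → E) {A : Finset ι} {a : ι → ℝ} {t M : ℝ}
    (ht : 0 ≤ t) (ha : ∀ i ∈ A, |a i| ≤ t) (hM : ∀ B ⊆ A, ‖∑ i ∈ B, v i‖ ≤ M) :
    ‖∑ i ∈ A, a i • v i‖ ≤ 2 * t * M := by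
  have hpos : ‖∑ i ∈ A, (a i)⁺ • v i‖ ≤ t * M :=
    norm_sum_smul_le_of_superlevel v ht (fun i _ => posPart_nonneg _)
      (fun i hi => sup_le ((le_abs_self _).trans (ha i hi)) ht)
      fun s => hM _ (Finset.filter_subset _ A)
  have hneg : ‖∑ i ∈ A, (a i)⁻ • v i‖ ≤ t * M :=
    norm_sum_smul_le_of_superlevel v ht (fun i _ => negPart_nonneg _)
      (fun i hi => sup_le ((neg_le_abs _).trans (ha i hi)) ht)
      fun s => hM _ (Finset.filter_subset _ A)
  calc ‖∑ i ∈ A, a i • v i‖ = ‖∑ i ∈ A, (a i)⁺ • v i - ∑ i ∈ A, (a i)⁻ • v i‖ := by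
        simp only [← Finset.sum_sub_distrib, ← sub_smul, posPart_sub_negPart]
    _ ≤ 2 * t * M := (norm_sub_le _ _).trans (by linarith)

end LayerCake

namespace SchauderBasisSys

theorem exists_injective_antitone_prepend {α : Type*} [LinearOrder α] (c : ℕ → α) (B : Finset ℕ)
    {τ : ℕ → ℕ} (hτ : Function.Injective τ) (hc : Antitone (c ∘ τ)) (hB : ∀ k, τ k ∉ B)
    (hle : ∀ b ∈ B, ∀ k, c (τ k) ≤ c b) :
    ∃ ρ : ℕ → ℕ, Function.Injective ρ ∧ Antitone (c ∘ ρ) ∧ Lam ρ B.card = B ∧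
      Set.range ρ = ↑B ∪ Set.range τ := by
  induction B using Finset.induction_on_max_value c with
  | empty => exact ⟨τ, hτ, hc, by simp [Lam], by simp⟩
  | insert b B hb hmax ih =>
    obtain ⟨ρ, hρ, hcρ, hLam, hrange⟩ := ih (fun k hk => hB k (Finset.mem_insert_of_mem hk))
      fun i hi => hle i (Finset.mem_insert_of_mem hi)
    have hρ_mem (k : ℕ) : ρ k ∈ B ∨ ρ k ∈ Set.range τ := by
      simpa only [hrange, Set.mem_union, Finset.mem_coe] using Set.mem_range_self (f := ρ) k
    have hρb (k : ℕ) : ρ k ≠ b := by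
      rintro rfl
      rcases hρ_mem k with hk | ⟨l, hl⟩
      · exact hb hk
      · exact hB l (hl ▸ Finset.mem_insert_self _ B)
    have hρ_le : c (ρ 0) ≤ c b := by
      rcases hρ_mem 0 with h0 | ⟨l, hl⟩
      · exact hmax _ h0
      · exact hl ▸ hle b (Finset.mem_insert_self b B) l
    refine ⟨fun n => Nat.casesOn n b ρ, ?_, ?_, ?_, ?_⟩
    · rintro (_ | i) (_ | j) hij
      · rfl
      · exact absurd hij.symm (hρb j)
      · exact absurd hij (hρb i)
      · exact congrArg _ (hρ hij)
    · refine antitone_nat_of_succ_le ?_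
      rintro (_ | n)
      · exact hρ_le
      · exact hcρ n.le_succ
    · rw [Finset.card_insert_of_notMem hb, Lam, Finset.range_add_one', Finset.image_insert,
        Finset.map_eq_image, Finset.image_image]
      exact congrArg (insert b) hLam
    · rw [← Nat.range_of_succ, Finset.coe_insert, Set.insert_union, ← hrange]
      rfl

theorem card_Lam {ρ : ℕ → ℕ} (hρ : Function.Injective ρ) (m : ℕ) : (Lam ρ m).card = m := by
  rw [Lam, Finset.card_image_of_injective _ hρ, Finset.card_range]

variable {X : Type*} [NormedAddCommGroup X] [NormedSpace ℝ X] {S : SchauderBasisSys X}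

section Projections

variable (S)

theorem G_eq_P_Lam {ρ : ℕ → ℕ} (hρ : Function.Injective ρ) (x : X) (m : ℕ) :
    S.G x ρ m = S.P (Lam ρ m) x := by
  rw [P, Lam, Finset.sum_image hρ.injOn, G]

theorem f_sum_smul (A : Finset ℕ) (a : ℕ → ℝ) (n : ℕ) :
    S.f n (∑ i ∈ A, a i • S.e i) = if n ∈ A then a n else 0 := by
  simp [map_sum, S.biorth]

theorem f_sub_P (A : Finset ℕ) (x : X) (n : ℕ) :
    S.f n (x - S.P A x) = if n ∈ A then 0 else S.f n x := by
  rw [map_sub, P, S.f_sum_smul A fun i => S.f i x]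
  split_ifs <;> simp

theorem P_sum_smul {A B : Finset ℕ} (hBA : B ⊆ A) (a : ℕ → ℝ) :
    S.P B (∑ i ∈ A, a i • S.e i) = ∑ i ∈ B, a i • S.e i :=
  Finset.sum_congr rfl fun i hi => by rw [S.f_sum_smul, if_pos (hBA hi)]

theorem P_ind {A B : Finset ℕ} (hBA : B ⊆ A) : S.P B (S.ind A) = S.ind B := by
  simpa only [ind, Pi.one_apply, one_smul] using S.P_sum_smul hBA 1

theorem P_sub_P {A B : Finset ℕ} (hBA : Disjoint B A) (x : X) : S.P B (x - S.P A x) = S.P B x :=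
  Finset.sum_congr rfl fun i hi => by rw [S.f_sub_P, if_neg (Finset.disjoint_left.1 hBA hi)]

end Projections

section GreedySets

variable {x : X} {A B : Finset ℕ} {ρ : ℕ → ℕ}

variable (S) in
/-- The vector `x` has a greedy ordering. This can fail: since the basis is not assumed to be
bounded below, the coefficients of `x` need not tend to `0`. -/
def HasGreedyOrdering (x : X) : Prop :=
  ∃ ρ, S.IsGreedyOrdering x ρ

variable (S) in
/-- `A` is a greedy set for `x`: it carries `|A|` largest coefficients of `x`, ties being resolved
arbitrarily. If `x` has a greedy ordering, then the finite greedy sets for `x` are the sets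
`Λ_m(x)`. -/
def IsGreedySet (x : X) (A : Finset ℕ) : Prop :=
  ∀ i ∈ A, ∀ j ∉ A, |S.f j x| ≤ |S.f i x|

theorem IsGreedyOrdering.isGreedySet_Lam (hρ : S.IsGreedyOrdering x ρ) (m : ℕ) :
    S.IsGreedySet x (Lam ρ m) := by
  intro i hi j hj
  obtain ⟨k, hk, rfl⟩ := Finset.mem_image.1 hi
  by_cases hj₀ : S.f j x = 0
  · simp [hj₀]
  obtain ⟨l, rfl⟩ := hρ.2.1 j hj₀
  have hml : m ≤ l := not_lt.1 fun hlm => hj (Finset.mem_image_of_mem ρ (Finset.mem_range.2 hlm))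
  exact hρ.2.2 k l ((Finset.mem_range.1 hk).le.trans hml)

theorem IsGreedySet.filter (hA : S.IsGreedySet x A) (p : ℕ → Prop) [DecidablePred p]
    (hp : ∀ i ∈ A, ∀ j ∈ A, p i → ¬ p j → |S.f j x| ≤ |S.f i x|) :
    S.IsGreedySet x {i ∈ A | p i} := by
  intro i hi j hj
  obtain ⟨hiA, hpi⟩ := Finset.mem_filter.1 hi
  by_cases hjA : j ∈ A
  · exact hp i hiA j hjA hpi fun hpj => hj (Finset.mem_filter.2 ⟨hjA, hpj⟩)
  · exact hA i hiA j hjA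

theorem IsGreedySet.sub_P (hB : S.IsGreedySet x B) (hBA : Disjoint B A) :
    S.IsGreedySet (x - S.P A x) B := by
  intro i hi j hj
  rw [S.f_sub_P, S.f_sub_P, if_neg (Finset.disjoint_left.1 hBA hi)]
  split_ifs
  · simp
  · exact hB i hi j hj

theorem isGreedySet_sum_smul {a : ℕ → ℝ} (ha : ∀ i ∈ A, |a i| = 1) (hBA : B ⊆ A) :
    S.IsGreedySet (∑ i ∈ A, a i • S.e i) B := by
  intro i hi j _
  rw [S.f_sum_smul, S.f_sum_smul, if_pos (hBA hi), ha i (hBA hi)]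
  split_ifs with hj
  · exact (ha j hj).le
  · simp

theorem IsGreedyOrdering.exists_sub_P (hρ : S.IsGreedyOrdering x ρ) (A : Finset ℕ) :
    ∃ τ, S.IsGreedyOrdering (x - S.P A x) τ ∧ ∀ k, τ k ∉ A := by
  have hinf : {k | ρ k ∉ A}.Infinite :=
    (A.finite_toSet.preimage hρ.1.injOn).infinite_compl
  have : Infinite {k | ρ k ∉ A} := hinf.to_subtype
  let φ := Nat.orderEmbeddingOfSet {k | ρ k ∉ A}
  have hφ : Set.range φ = {k | ρ k ∉ A} := Nat.orderEmbeddingOfSet_range _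
  have hτ (k : ℕ) : ρ (φ k) ∉ A := hφ.le (Set.mem_range_self k)
  refine ⟨ρ ∘ φ, ⟨hρ.1.comp φ.injective, fun n hn => ?_, fun j k hjk => ?_⟩, hτ⟩
  · rw [S.f_sub_P] at hn
    obtain ⟨hnA, hnx⟩ : n ∉ A ∧ S.f n x ≠ 0 := by simpa using hn
    obtain ⟨k, rfl⟩ := hρ.2.1 n hnx
    obtain ⟨l, rfl⟩ := hφ.ge hnA
    exact ⟨l, rfl⟩
  · rw [S.f_sub_P, S.f_sub_P, Function.comp_apply, Function.comp_apply,
      if_neg (hτ j), if_neg (hτ k)]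
    exact hρ.2.2 _ _ (φ.monotone hjk)

theorem IsGreedySet.exists_Lam_eq_of_sub_P (hA : S.IsGreedySet x A) {τ : ℕ → ℕ}
    (hτ : S.IsGreedyOrdering (x - S.P A x) τ) (hτA : ∀ k, τ k ∉ A) :
    ∃ ρ, S.IsGreedyOrdering x ρ ∧ Lam ρ A.card = A := by
  have hf {n : ℕ} (hn : n ∉ A) : S.f n (x - S.P A x) = S.f n x := by rw [S.f_sub_P, if_neg hn]
  have hanti : Antitone ((fun n => |S.f n x|) ∘ τ) := fun j k hjk => by
    simpa only [Function.comp, hf (hτA _)] using hτ.2.2 j k hjk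
  obtain ⟨ρ, hρ, hcρ, hLam, hrange⟩ := exists_injective_antitone_prepend (fun n => |S.f n x|) A
    hτ.1 hanti hτA fun i hi k => hA i hi _ (hτA k)
  refine ⟨ρ, ⟨hρ, fun n hn => ?_, fun _ _ hjk => hcρ hjk⟩, hLam⟩
  rw [hrange]
  by_cases hnA : n ∈ A
  · exact Or.inl hnA
  · exact Or.inr (hτ.2.1 n (by rwa [hf hnA]))

theorem IsGreedySet.exists_Lam_eq (hA : S.IsGreedySet x A) (hx : S.HasGreedyOrdering x) :
    ∃ ρ, S.IsGreedyOrdering x ρ ∧ Lam ρ A.card = A :=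
  let ⟨_, hρ⟩ := hx
  let ⟨_, hτ, hτA⟩ := hρ.exists_sub_P A
  hA.exists_Lam_eq_of_sub_P hτ hτA

theorem HasGreedyOrdering.sub_P (hx : S.HasGreedyOrdering x) (A : Finset ℕ) :
    S.HasGreedyOrdering (x - S.P A x) :=
  let ⟨_, hρ⟩ := hx
  let ⟨τ, hτ, _⟩ := hρ.exists_sub_P A
  ⟨τ, hτ⟩

theorem hasGreedyOrdering_sum_smul (A : Finset ℕ) (a : ℕ → ℝ) :
    S.HasGreedyOrdering (∑ i ∈ A, a i • S.e i) := by
  have hid : S.IsGreedyOrdering 0 id :=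
    ⟨Function.injective_id, fun n _ => ⟨n, rfl⟩, fun _ _ _ => by simp⟩
  obtain ⟨τ, hτ, hτA⟩ := hid.exists_sub_P A
  have hzero : (0 : X) - S.P A 0 = ∑ i ∈ A, a i • S.e i - S.P A (∑ i ∈ A, a i • S.e i) := by
    rw [S.P_sum_smul subset_rfl, sub_self]
    simp [P]
  have hA : S.IsGreedySet (∑ i ∈ A, a i • S.e i) A :=
    fun i _ j hj => by simp [S.f_sum_smul, hj]
  obtain ⟨ρ, hρ, -⟩ := hA.exists_Lam_eq_of_sub_P (hzero ▸ hτ) hτA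
  exact ⟨ρ, hρ⟩

end GreedySets

section QuasiGreedy

open scoped NNReal

variable {x : X} {A Λ : Finset ℕ} {K Γ : ℝ≥0}

variable (S) in
/-- Quasi-greediness with constant `K`, in terms of greedy sets instead of greedy orderings. -/
def QuasiGreedyWith (K : ℝ≥0) : Prop :=
  ∀ ⦃x : X⦄ ⦃Λ : Finset ℕ⦄, S.HasGreedyOrdering x → S.IsGreedySet x Λ → ‖S.P Λ x‖ ≤ K * ‖x‖

theorem QuasiGreedy.exists_quasiGreedyWith (h : S.QuasiGreedy) : ∃ K, S.QuasiGreedyWith K := by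
  obtain ⟨K, hK⟩ := h
  refine ⟨K.toNNReal, fun x Λ hx hΛ => ?_⟩
  obtain ⟨ρ, hρ, hLam⟩ := hΛ.exists_Lam_eq hx
  calc ‖S.P Λ x‖ = ‖S.G x ρ Λ.card‖ := by rw [S.G_eq_P_Lam hρ.1, hLam]
    _ ≤ K * ‖x‖ := hK x ρ _ hρ
    _ ≤ K.toNNReal * ‖x‖ := by gcongr; exact Real.le_coe_toNNReal K

theorem QuasiGreedyWith.norm_ind_le (hK : S.QuasiGreedyWith K) {ε : ℕ → ℝ}
    (hε : ∀ i ∈ A, |ε i| = 1) :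
    ‖S.ind A‖ ≤ 2 * K * ‖∑ i ∈ A, ε i • S.e i‖ := by
  have hsub (B : Finset ℕ) (hBA : B ⊆ A) :
      ‖∑ i ∈ B, ε i • S.e i‖ ≤ K * ‖∑ i ∈ A, ε i • S.e i‖ := by
    rw [← S.P_sum_smul hBA]
    exact hK (hasGreedyOrdering_sum_smul A ε) (isGreedySet_sum_smul hε hBA)
  have hind : S.ind A = ∑ i ∈ A, ε i • ε i • S.e i :=
    Finset.sum_congr rfl fun i hi => by rw [smul_smul, ← abs_mul_abs_self, hε i hi]; simp
  calc ‖S.ind A‖ ≤ 2 * 1 * (K * ‖∑ i ∈ A, ε i • S.e i‖) :=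
        hind ▸ norm_sum_smul_le_of_abs_le _ zero_le_one (fun i hi => (hε i hi).le) hsub
    _ = 2 * K * ‖∑ i ∈ A, ε i • S.e i‖ := by ring

theorem QuasiGreedyWith.norm_sum_normalized_le (hK : S.QuasiGreedyWith K)
    (hx : S.HasGreedyOrdering x) (hΛ : S.IsGreedySet x Λ) {t : ℝ} (ht : 0 < t)
    (hΛt : ∀ i ∈ Λ, t ≤ |S.f i x|) :
    t * ‖∑ i ∈ Λ, (|S.f i x|⁻¹ * S.f i x) • S.e i‖ ≤ 2 * K * ‖x‖ := by
  have hpos (i : ℕ) (hi : i ∈ Λ) : 0 < |S.f i x| := ht.trans_le (hΛt i hi)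
  have hlevel (s : ℝ) :
      ‖∑ i ∈ Λ with s < |S.f i x|⁻¹, S.f i x • S.e i‖ ≤ 2 * K * ‖x‖ := by
    have hlow : S.IsGreedySet x {i ∈ Λ | ¬ s < |S.f i x|⁻¹} :=
      hΛ.filter _ fun i hi j hj his hjs => by
        have hij : |S.f i x|⁻¹ < |S.f j x|⁻¹ := (not_lt.1 his).trans_lt (not_not.1 hjs)
        exact (inv_le_inv₀ (hpos i hi) (hpos j hj)).1 hij.le
    have hsplit : ∑ i ∈ Λ with s < |S.f i x|⁻¹, S.f i x • S.e i =
        S.P Λ x - S.P {i ∈ Λ | ¬ s < |S.f i x|⁻¹} x :=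
      eq_sub_of_add_eq (Finset.sum_filter_add_sum_filter_not _ _ _)
    calc _ ≤ ‖S.P Λ x‖ + ‖S.P {i ∈ Λ | ¬ s < |S.f i x|⁻¹} x‖ := hsplit ▸ norm_sub_le _ _
      _ ≤ 2 * K * ‖x‖ := by linarith [hK hx hΛ, hK hx hlow]
  have hsum := norm_sum_smul_le_of_superlevel (fun i => S.f i x • S.e i) (inv_nonneg.2 ht.le)
    (fun i _ => inv_nonneg.2 (abs_nonneg (S.f i x))) (fun i hi => inv_anti₀ ht (hΛt i hi)) hlevel
  simp only [smul_smul] at hsum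
  rwa [← le_inv_mul_iff₀ ht]

theorem QuasiGreedyWith.mul_norm_ind_le (hK : S.QuasiGreedyWith K)
    (hx : S.HasGreedyOrdering x) (hΛ : S.IsGreedySet x Λ) {t : ℝ} (ht : 0 ≤ t)
    (hΛt : ∀ i ∈ Λ, t ≤ |S.f i x|) :
    t * ‖S.ind Λ‖ ≤ 4 * K ^ 2 * ‖x‖ := by
  rcases ht.eq_or_lt with rfl | ht
  · rw [zero_mul]
    positivity
  set z := ∑ i ∈ Λ, (|S.f i x|⁻¹ * S.f i x) • S.e i
  have hunit (i : ℕ) (hi : i ∈ Λ) : |(|S.f i x|⁻¹ * S.f i x)| = 1 := by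
    rw [abs_mul, abs_inv, abs_abs, inv_mul_cancel₀ (ht.trans_le (hΛt i hi)).ne']
  calc t * ‖S.ind Λ‖ ≤ t * (2 * K * ‖z‖) := by gcongr; exact hK.norm_ind_le hunit
    _ = 2 * K * (t * ‖z‖) := by ring
    _ ≤ 2 * K * (2 * K * ‖x‖) := by
      gcongr ?_ * ?_
      exact hK.norm_sum_normalized_le hx hΛ ht hΛt
    _ = 4 * K ^ 2 * ‖x‖ := by ring

theorem QuasiGreedyWith.norm_P_le (hK : S.QuasiGreedyWith K) (hx : S.HasGreedyOrdering x)
    (hΛ : S.IsGreedySet x Λ) (hΛA : Disjoint Λ A)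
    (hΓ : ∀ B ⊆ A, ‖S.ind B‖ ≤ Γ * ‖S.ind Λ‖) :
    ‖S.P A x‖ ≤ 8 * Γ * K ^ 2 * ‖x - S.P A x‖ := by
  set t : ℝ≥0 := A.sup fun i => ‖S.f i x‖₊
  have hAt (i : ℕ) (hi : i ∈ A) : |S.f i x| ≤ t := by
    exact_mod_cast Finset.le_sup (f := fun i => ‖S.f i x‖₊) hi
  have hΛt (i : ℕ) (hi : i ∈ Λ) : t ≤ |S.f i (x - S.P A x)| := by
    rw [S.f_sub_P, if_neg (Finset.disjoint_left.1 hΛA hi)]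
    have : t ≤ ‖S.f i x‖₊ := Finset.sup_le fun j hj => hΛ i hi j (Finset.disjoint_right.1 hΛA hj)
    exact_mod_cast this
  calc ‖S.P A x‖ ≤ 2 * t * (Γ * ‖S.ind Λ‖) := norm_sum_smul_le_of_abs_le S.e t.2 hAt hΓ
    _ = 2 * Γ * (t * ‖S.ind Λ‖) := by ring
    _ ≤ 2 * Γ * (4 * K ^ 2 * ‖x - S.P A x‖) := by
      gcongr ?_ * ?_
      exact hK.mul_norm_ind_le (hx.sub_P A) (hΛ.sub_P hΛA) t.2 hΛt
    _ = 8 * Γ * K ^ 2 * ‖x - S.P A x‖ := by ring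

theorem QuasiGreedyWith.norm_sub_P_le (hK : S.QuasiGreedyWith K) (hx : S.HasGreedyOrdering x)
    (hΛ : S.IsGreedySet x Λ) (hΛA : Disjoint Λ A)
    (hΓ : ∀ B ⊆ A, ‖S.ind B‖ ≤ Γ * ‖S.ind Λ‖) :
    ‖x - S.P Λ x‖ ≤ (1 + K + 8 * Γ * K ^ 2) * ‖x - S.P A x‖ := by
  have hPΛ : ‖S.P Λ x‖ ≤ K * ‖x - S.P A x‖ :=
    S.P_sub_P hΛA x ▸ hK (hx.sub_P A) (hΛ.sub_P hΛA)
  calc ‖x - S.P Λ x‖ = ‖(x - S.P A x) - S.P Λ x + S.P A x‖ := by congr 1; abel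
    _ ≤ ‖x - S.P A x‖ + ‖S.P Λ x‖ + ‖S.P A x‖ :=
      (norm_add_le _ _).trans (by gcongr; exact norm_sub_le _ _)
    _ ≤ (1 + K + 8 * Γ * K ^ 2) * ‖x - S.P A x‖ := by
      linarith [hK.norm_P_le hx hΛ hΛA hΓ]

end QuasiGreedy

section ReversePartiallyGreedy

variable (S) in
/-- Reverse partially greedy: `‖x - G_m(x)‖ ≤ C σ̃^R_m(x)`, the infimum in `σ̃^R_m(x)` being
expressed by quantifying over the admissible sets `A`. -/
def ReversePartiallyGreedy : Prop :=
  ∃ C : ℝ, ∀ (x : X) (ρ : ℕ → ℕ) (m : ℕ) (A : Finset ℕ),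
    S.IsGreedyOrdering x ρ → A.card ≤ m → (∀ i ∈ A, ∀ j ∈ Lam ρ m, j < i) →
    ‖x - S.G x ρ m‖ ≤ C * ‖x - S.P A x‖

theorem ReversePartiallyGreedy.quasiGreedy (h : S.ReversePartiallyGreedy) : S.QuasiGreedy := by
  obtain ⟨C, hC⟩ := h
  refine ⟨1 + C, fun x ρ m hρ => ?_⟩
  have hempty : ‖x - S.G x ρ m‖ ≤ C * ‖x‖ := by
    simpa [P] using hC x ρ m ∅ hρ (by simp) (by simp)
  calc ‖S.G x ρ m‖ = ‖x - (x - S.G x ρ m)‖ := by rw [sub_sub_cancel]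
    _ ≤ ‖x‖ + ‖x - S.G x ρ m‖ := norm_sub_le _ _
    _ ≤ (1 + C) * ‖x‖ := by linarith

theorem ReversePartiallyGreedy.reverseConservative (h : S.ReversePartiallyGreedy) :
    S.ReverseConservative := by
  obtain ⟨C, hC⟩ := h
  refine ⟨C, fun A B hcard hlt => ?_⟩
  have hBA : Disjoint B A := Finset.disjoint_left.2 fun i hB hA => (hlt i hA i hB).false
  have hunion : S.ind (B ∪ A) = S.ind B + S.ind A := Finset.sum_union hBA
  have hsum : ∑ i ∈ B ∪ A, (1 : ℝ) • S.e i = S.ind (B ∪ A) := by simp only [one_smul, ind]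
  have hgreedy : S.IsGreedySet (S.ind (B ∪ A)) B :=
    hsum ▸ isGreedySet_sum_smul (fun _ _ => abs_one) Finset.subset_union_left
  obtain ⟨ρ, hρ, hLam⟩ := hgreedy.exists_Lam_eq (hsum ▸ hasGreedyOrdering_sum_smul (B ∪ A) 1)
  have hCρ := hC _ ρ B.card A hρ hcard (by rwa [hLam])
  rwa [S.G_eq_P_Lam hρ.1, hLam, S.P_ind Finset.subset_union_left,
    S.P_ind Finset.subset_union_right, hunion, add_sub_cancel_left, add_sub_cancel_right] at hCρ

theorem QuasiGreedy.reversePartiallyGreedy (hq : S.QuasiGreedy) (hr : S.ReverseConservative) :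
    S.ReversePartiallyGreedy := by
  obtain ⟨K, hK⟩ := hq.exists_quasiGreedyWith
  obtain ⟨Γ, hΓ⟩ := hr
  refine ⟨1 + K + 8 * Γ.toNNReal * K ^ 2, fun x ρ m A hρ hcard hlt => ?_⟩
  rw [S.G_eq_P_Lam hρ.1]
  refine hK.norm_sub_P_le ⟨ρ, hρ⟩ (hρ.isGreedySet_Lam m)
    (Finset.disjoint_left.2 fun i hΛ hA => (hlt i hA i hΛ).false) fun B hBA => ?_
  have hBcard : B.card ≤ (Lam ρ m).card := by
    rw [card_Lam hρ.1]
    exact (Finset.card_le_card hBA).trans hcard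
  calc ‖S.ind B‖ ≤ Γ * ‖S.ind (Lam ρ m)‖ := hΓ B _ hBcard fun i hi => hlt i (hBA hi)
    _ ≤ Γ.toNNReal * ‖S.ind (Lam ρ m)‖ := by gcongr; exact Real.le_coe_toNNReal Γ

end ReversePartiallyGreedy

end SchauderBasisSys

theorem stmt_1_general {X : Type*} [NormedAddCommGroup X] [NormedSpace ℝ X]
    (S : SchauderBasisSys X) :
    S.ReversePartiallyGreedy ↔ S.QuasiGreedy ∧ S.ReverseConservative :=
  ⟨fun h => ⟨h.quasiGreedy, h.reverseConservative⟩, fun h => h.1.reversePartiallyGreedy h.2⟩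

/-- A Schauder basis of a real Banach space is reverse partially greedy
(i.e. there is `C` with `‖x - G_m(x)‖ ≤ C σ̃^R_m(x)`, the infimum over finite `A` with
`|A| ≤ m` and `min A > β_m(x) = max Λ_m(x)` of `‖x - P_A(x)‖`) if and only if it is
quasi-greedy and reverse conservative. -/
theorem stmt_1 {X : Type*} [NormedAddCommGroup X] [NormedSpace ℝ X] [CompleteSpace X]
    (S : SchauderBasisSys X) :
    (∃ C : ℝ, ∀ (x : X) (ρ : ℕ → ℕ) (m : ℕ) (A : Finset ℕ),
        S.IsGreedyOrdering x ρ → A.card ≤ m →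
        (∀ i ∈ A, ∀ j ∈ Lam ρ m, j < i) →
        ‖x - S.G x ρ m‖ ≤ C * ‖x - S.P A x‖) ↔
      S.QuasiGreedy ∧ S.ReverseConservative :=
  stmt_1_general S
end

section
/- For n ≥ 1 let F_n = {A ⊂ ℕ finite : |A| ≤ n! and n! ≤ min A} and F = ⋃_{n≥1} F_n, and on c00 define the norm ‖x‖ = sup{Σ_{i∈A}|x_i| : A ∈ F}. Let ‖·‖* denote the induced dual norm on finitely supported functionals, i.e., for scalars (a_i), ‖Σ_i a_i e_i^*‖* = sup{Σ_i a_i x_i : x ∈ c00, ‖x‖ ≤ 1}. Then: (i) if n_1 < n_2 < … and y* = Σ_i a_i e_{n_i}^* is a spread to the right of x* = Σ_i a_i e_i^* (meaning i ≤ n_i for all i), then ‖y*‖* ≤ ‖x*‖*; consequently ‖Σ_{i∈A} e_i^*‖* ≤ ‖Σ_{i∈B} e_i^*‖* whenever |A| ≤ |B| and max B < min A (the dual system is reverse conservative with constant 1); (ii) ‖Σ_{i=1}^{n!} e_i^*‖* ≥ n and ‖Σ_{i=n!+1}^{2n!} e_i^*‖* = 1 for all n ≥ 1, so the dual system is not democratic.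 -/
/-- The family `F = ⋃_{n ≥ 1} F_n`, where `F_n` consists of the finite sets `A` with
`|A| ≤ n!` whose least element is at least `n!`. Here `c₀₀` is modelled as `ℕ →₀ ℝ` with
coordinates indexed from `0`, corresponding to the paper's indices `1, 2, …`; so the
condition `n! ≤ min A` (in paper indexing) reads `n! ≤ i + 1` for all `i ∈ A`. -/
def FF : Set (Finset ℕ) :=
  {A | ∃ n : ℕ, 1 ≤ n ∧ A.card ≤ n.factorial ∧ ∀ i ∈ A, n.factorial ≤ i + 1}

/-- The norm `‖x‖ = sup{∑_{i ∈ A} |x_i| : A ∈ F}` on finitely supported sequences. -/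
noncomputable def normF (x : ℕ →₀ ℝ) : ℝ :=
  sSup {r : ℝ | ∃ A ∈ FF, r = ∑ i ∈ A, |x i|}

/-- Finitely supported functionals `a = ∑ a_i e_i^*` act on `c₀₀` by
`⟨a, x⟩ = ∑ a_i x_i`. -/
noncomputable def pairF (a x : ℕ →₀ ℝ) : ℝ :=
  ∑ i ∈ a.support, a i * x i

/-- The dual norm `‖a‖* = sup{⟨a, x⟩ : x ∈ c₀₀, ‖x‖ ≤ 1}` of a finitely supported
functional. -/
noncomputable def dualNormF (a : ℕ →₀ ℝ) : ℝ :=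
  sSup {r : ℝ | ∃ x : ℕ →₀ ℝ, normF x ≤ 1 ∧ r = pairF a x}

/-- The indicator `∑_{i ∈ A} e_i^*` (as a finitely supported coefficient sequence). -/
noncomputable def indF (A : Finset ℕ) : ℕ →₀ ℝ :=
  ∑ i ∈ A, Finsupp.single i (1 : ℝ)

/-!
The dual norm is `1` on indicators of nonempty sets of `FF` and, since spreading a set of `FF` to
the right keeps it in `FF`, spreading a functional to the right does not increase its dual norm.

For the lower bound `N + 1` on the dual norm of `∑_{i=1}^{(N+1)!} e_i^*`, test against the vector
with entries `1 / k!` on the blocks `k! ≤ i < (k + 1)!`, `k ≤ N`, and `1 / N!` at `i = (N + 1)!`.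
It lies in the unit ball: a set of `F_m` with `m ≤ N` sees at most `m!` entries, each at most
`1 / m!`, and one with `m > N` sees at most the last entry. But block `k` alone contributes `k`, so
the entries add up to `N (N + 1) / 2 + 1 / N! ≥ N + 1`.
-/

theorem isLowerSet_FF : IsLowerSet FF := by
  rintro A B hBA ⟨m, hm, hcard, hmin⟩
  exact ⟨m, hm, (Finset.card_le_card hBA).trans hcard, fun i hi => hmin i (hBA hi)⟩

theorem singleton_mem_FF (i : ℕ) : {i} ∈ FF :=
  ⟨1, le_rfl, by simp, by simp⟩

theorem image_mem_FF {A : Finset ℕ} (hA : A ∈ FF) {g : ℕ → ℕ} (hg : ∀ i ∈ A, i ≤ g i) :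
    A.image g ∈ FF := by
  obtain ⟨m, hm, hcard, hmin⟩ := hA
  refine ⟨m, hm, Finset.card_image_le.trans hcard, Finset.forall_mem_image.2 fun i hi => ?_⟩
  exact (hmin i hi).trans (Nat.succ_le_succ (hg i hi))

theorem Ico_factorial_mem_FF {n : ℕ} (hn : 1 ≤ n) :
    Finset.Ico n.factorial (2 * n.factorial) ∈ FF := by
  refine ⟨n, hn, ?_, fun i hi => (Finset.mem_Ico.1 hi).1.trans (Nat.le_succ i)⟩
  rw [Nat.card_Ico]
  omega

section NormF

variable {x y : ℕ →₀ ℝ} {A S : Finset ℕ} {c : ℝ}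

theorem bddAbove_sum_abs_FF (x : ℕ →₀ ℝ) :
    BddAbove {r : ℝ | ∃ A ∈ FF, r = ∑ i ∈ A, |x i|} := by
  refine ⟨∑ i ∈ x.support, |x i|, ?_⟩
  rintro r ⟨A, -, rfl⟩
  calc ∑ i ∈ A, |x i| ≤ ∑ i ∈ A ∪ x.support, |x i| :=
        Finset.sum_le_sum_of_subset_of_nonneg Finset.subset_union_left fun i _ _ => abs_nonneg _
    _ = ∑ i ∈ x.support, |x i| :=
        (Finset.sum_subset Finset.subset_union_right fun i _ hi => by simpa using hi).symm

theorem sum_abs_le_normF (x : ℕ →₀ ℝ) (hA : A ∈ FF) : ∑ i ∈ A, |x i| ≤ normF x :=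
  le_csSup (bddAbove_sum_abs_FF x) ⟨A, hA, rfl⟩

theorem normF_le (h : ∀ A ∈ FF, ∑ i ∈ A, |x i| ≤ c) : normF x ≤ c := by
  refine csSup_le ⟨_, {0}, singleton_mem_FF 0, rfl⟩ ?_
  rintro r ⟨A, hA, rfl⟩
  exact h A hA

theorem abs_apply_le_normF (x : ℕ →₀ ℝ) (i : ℕ) : |x i| ≤ normF x := by
  simpa using sum_abs_le_normF x (singleton_mem_FF i)

theorem normF_le_normF_of_abs_le (h : ∀ i, |y i| ≤ |x i|) : normF y ≤ normF x :=
  normF_le fun _ hA => (Finset.sum_le_sum fun i _ => h i).trans (sum_abs_le_normF x hA)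

theorem normF_indicator_le {f : ℕ → ℝ} (h : ∀ A ∈ FF, A ⊆ S → ∑ i ∈ A, |f i| ≤ c) :
    normF (Finsupp.indicator S fun i _ => f i) ≤ c := by
  refine normF_le fun A hA => ?_
  calc ∑ i ∈ A, |Finsupp.indicator S (fun i _ => f i) i|
      = ∑ i ∈ A, if i ∈ S then |f i| else 0 :=
        Finset.sum_congr rfl fun i _ => by
          rw [Finsupp.indicator_apply, dite_eq_ite, apply_ite abs, abs_zero]
    _ = ∑ i ∈ A ∩ S, |f i| := Finset.sum_ite_mem A S _
    _ ≤ c := h _ (isLowerSet_FF Finset.inter_subset_left hA) Finset.inter_subset_right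

theorem normF_single_le (i : ℕ) (c : ℝ) : normF (Finsupp.single i c) ≤ |c| := by
  rw [← Finsupp.indicator_singleton i fun _ _ => c]
  refine normF_indicator_le fun A _ hAi => ?_
  simpa using Finset.sum_le_sum_of_subset_of_nonneg hAi fun _ _ _ => abs_nonneg c

theorem normF_indicator_comp_le {g : ℕ → ℕ} (hinj : Set.InjOn g S) (hg : ∀ i ∈ S, i ≤ g i)
    (x : ℕ →₀ ℝ) : normF (Finsupp.indicator S fun i _ => x (g i)) ≤ normF x := by
  refine normF_indicator_le fun A hA hAS => ?_
  rw [← Finset.sum_image (f := fun j => |x j|) (hinj.mono hAS)]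
  exact sum_abs_le_normF x (image_mem_FF hA fun i hi => hg i (hAS hi))

end NormF

section DualNormF

variable {a b x : ℕ →₀ ℝ} {A B S : Finset ℕ}

theorem pairF_le_dualNormF (a : ℕ →₀ ℝ) (hx : normF x ≤ 1) : pairF a x ≤ dualNormF a := by
  refine le_csSup ⟨∑ i ∈ a.support, |a i|, ?_⟩ ⟨x, hx, rfl⟩
  rintro r ⟨y, hy, rfl⟩
  refine Finset.sum_le_sum fun i _ => (le_abs_self _).trans ?_
  rw [abs_mul]
  exact mul_le_of_le_one_right (abs_nonneg _) ((abs_apply_le_normF y i).trans hy)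

theorem dualNormF_le {c : ℝ} (h : ∀ x : ℕ →₀ ℝ, normF x ≤ 1 → pairF a x ≤ c) :
    dualNormF a ≤ c := by
  refine csSup_le ⟨_, 0, normF_le (by simp), rfl⟩ ?_
  rintro r ⟨x, hx, rfl⟩
  exact h x hx

theorem dualNormF_le_dualNormF_of_abs_le (h : ∀ i, |a i| ≤ |b i|) :
    dualNormF a ≤ dualNormF b := by
  refine dualNormF_le fun x hx => ?_
  let y : ℕ →₀ ℝ := Finsupp.zipWith (fun s t => SignType.sign s * |t|) (by simp) b x
  have hyx (i : ℕ) : |y i| ≤ |x i| := by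
    rw [Finsupp.zipWith_apply, abs_mul, abs_abs]
    refine mul_le_of_le_one_left (abs_nonneg _) ?_
    rcases lt_trichotomy (b i) 0 with hb | hb | hb <;> simp [hb]
  have hsupp : a.support ⊆ b.support := fun i hi => by
    rw [Finsupp.mem_support_iff, ← abs_pos] at hi ⊢
    exact hi.trans_le (h i)
  calc pairF a x ≤ ∑ i ∈ a.support, |b i| * |x i| :=
        Finset.sum_le_sum fun i _ => (le_abs_self _).trans <| by
          rw [abs_mul]
          exact mul_le_mul_of_nonneg_right (h i) (abs_nonneg _)
    _ ≤ ∑ i ∈ b.support, |b i| * |x i| :=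
        Finset.sum_le_sum_of_subset_of_nonneg hsupp fun i _ _ => by positivity
    _ = pairF b y :=
        Finset.sum_congr rfl fun i _ => by
          rw [Finsupp.zipWith_apply, ← mul_assoc, self_mul_sign]
    _ ≤ dualNormF b := pairF_le_dualNormF b ((normF_le_normF_of_abs_le hyx).trans hx)

theorem pairF_mapDomain (g : ℕ → ℕ) (a x : ℕ →₀ ℝ) :
    pairF (Finsupp.mapDomain g a) x = ∑ i ∈ a.support, a i * x (g i) :=
  Finsupp.sum_mapDomain_index (h := fun i c => c * x i) (fun _ => zero_mul _)
    fun _ _ _ => add_mul _ _ _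

theorem dualNormF_mapDomain_le {g : ℕ → ℕ} (hinj : Set.InjOn g a.support)
    (hg : ∀ i ∈ a.support, i ≤ g i) : dualNormF (Finsupp.mapDomain g a) ≤ dualNormF a := by
  refine dualNormF_le fun x hx => ?_
  have hpair : pairF (Finsupp.mapDomain g a) x =
      pairF a (Finsupp.indicator a.support fun i _ => x (g i)) := by
    rw [pairF_mapDomain]
    exact Finset.sum_congr rfl fun i hi => by rw [Finsupp.indicator_of_mem hi]
  rw [hpair]
  exact pairF_le_dualNormF a ((normF_indicator_comp_le hinj hg x).trans hx)

theorem indF_apply (A : Finset ℕ) (i : ℕ) : indF A i = if i ∈ A then 1 else 0 := by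
  simp [indF, Finsupp.finsetSum_apply, Finsupp.single_apply]

theorem support_indF (A : Finset ℕ) : (indF A).support = A := by
  ext i
  simp [indF_apply]

theorem pairF_indF (A : Finset ℕ) (x : ℕ →₀ ℝ) : pairF (indF A) x = ∑ i ∈ A, x i := by
  rw [pairF, support_indF]
  exact Finset.sum_congr rfl fun i hi => by rw [indF_apply, if_pos hi, one_mul]

theorem mapDomain_indF {g : ℕ → ℕ} (hinj : Set.InjOn g S) :
    Finsupp.mapDomain g (indF S) = indF (S.image g) := by
  simp only [indF, Finsupp.mapDomain_finsetSum, Finsupp.mapDomain_single, Finset.sum_image hinj]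

theorem dualNormF_indF_mono (hAB : A ⊆ B) : dualNormF (indF A) ≤ dualNormF (indF B) := by
  refine dualNormF_le_dualNormF_of_abs_le fun i => ?_
  rw [indF_apply, indF_apply]
  split_ifs with hA hB
  · rfl
  · exact absurd (hAB hA) hB
  all_goals simp

theorem dualNormF_indF_le_of_forall_le (hcard : A.card ≤ B.card)
    (hle : ∀ i ∈ B, ∀ j ∈ A, i ≤ j) : dualNormF (indF A) ≤ dualNormF (indF B) := by
  obtain ⟨S, hSB, hSA⟩ := Finset.exists_subset_card_eq hcard
  obtain ⟨g, hg⟩ := S.finite_toSet.exists_bijOn_of_encard_eq (t := (A : Set ℕ)) (by simp [hSA])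
  have himage : S.image g = A := by exact_mod_cast hg.image_eq
  have hspread : dualNormF (Finsupp.mapDomain g (indF S)) ≤ dualNormF (indF S) := by
    refine dualNormF_mapDomain_le ?_ ?_ <;> rw [support_indF]
    exacts [hg.injOn, fun i hi => hle i (hSB hi) (g i) (hg.mapsTo hi)]
  rw [mapDomain_indF hg.injOn, himage] at hspread
  exact hspread.trans (dualNormF_indF_mono hSB)

theorem one_le_dualNormF_indF (hA : A.Nonempty) : 1 ≤ dualNormF (indF A) := by
  obtain ⟨i, hi⟩ := hA
  have hsingle : normF (Finsupp.single i 1) ≤ 1 := (normF_single_le i 1).trans_eq abs_one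
  simpa [pairF_indF, Finsupp.single_apply, hi] using pairF_le_dualNormF (indF A) hsingle

theorem dualNormF_indF_eq_one (hA : A ∈ FF) (hne : A.Nonempty) : dualNormF (indF A) = 1 := by
  refine le_antisymm (dualNormF_le fun x hx => ?_) (one_le_dualNormF_indF hne)
  rw [pairF_indF]
  exact (Finset.sum_le_sum fun i _ => le_abs_self _).trans ((sum_abs_le_normF x hA).trans hx)

theorem dualNormF_indF_Ico_factorial {n : ℕ} (hn : 1 ≤ n) :
    dualNormF (indF (Finset.Ico n.factorial (2 * n.factorial))) = 1 := by
  refine dualNormF_indF_eq_one (Ico_factorial_mem_FF hn) (Finset.nonempty_Ico.2 ?_)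
  have := n.factorial_pos
  omega

end DualNormF

section FactorialWeight

open scoped Nat

/-- The reciprocal of the largest `k !` with `k ≤ N` and `k ! ≤ i`: the entries of the test vector
whose pairing with `∑_{i=1}^{(N+1)!} e_i^*` bounds the dual norm of that functional from below. Here
`i ≥ 1` is the paper's index, so that coordinate `j` of a vector in `ℕ →₀ ℝ` is
`factorialWeight N (j + 1)`; the junk value at `i = 0` is `1`. -/
noncomputable def factorialWeight (N i : ℕ) : ℝ :=
  ((Nat.findGreatest (fun k => k ! ≤ i) N)! : ℝ)⁻¹

variable {N m k i : ℕ}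

theorem factorialWeight_nonneg (N i : ℕ) : 0 ≤ factorialWeight N i := by
  unfold factorialWeight
  positivity

theorem factorialWeight_le_one (N i : ℕ) : factorialWeight N i ≤ 1 :=
  inv_le_one_of_one_le₀ (by exact_mod_cast Nat.factorial_pos _)

theorem factorialWeight_le (hm : m ≤ N) (hi : m ! ≤ i) : factorialWeight N i ≤ (m ! : ℝ)⁻¹ := by
  have hle := Nat.factorial_le (Nat.le_findGreatest (P := fun k => k ! ≤ i) hm hi)
  unfold factorialWeight
  gcongr

theorem inv_factorial_le_factorialWeight (N i : ℕ) : (N ! : ℝ)⁻¹ ≤ factorialWeight N i := by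
  have hle := Nat.factorial_le (Nat.findGreatest_le (P := fun k => k ! ≤ i) N)
  unfold factorialWeight
  gcongr

theorem le_factorialWeight (N : ℕ) (hi : i < (k + 1)!) : (k ! : ℝ)⁻¹ ≤ factorialWeight N i := by
  have hle : Nat.findGreatest (fun k => k ! ≤ i) N ≤ k := by
    by_contra! hlt
    have hspec := Nat.findGreatest_of_ne_zero (P := fun k => k ! ≤ i) (n := N) rfl (by omega)
    exact hi.not_ge ((Nat.factorial_le hlt).trans hspec)
  have := Nat.factorial_le hle
  unfold factorialWeight
  gcongr

theorem le_sum_factorialWeight_block (N k : ℕ) :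
    (k : ℝ) ≤ ∑ i ∈ Finset.Ico k ! (k + 1)!, factorialWeight N i := by
  have hcard : (Finset.Ico k ! (k + 1)!).card = k * k ! := by
    rw [Nat.card_Ico, Nat.factorial_succ, Nat.succ_mul, Nat.add_sub_cancel]
  calc (k : ℝ) = (k * k ! : ℕ) • (k ! : ℝ)⁻¹ := by
        rw [nsmul_eq_mul, Nat.cast_mul, mul_inv_cancel_right₀ (by positivity)]
    _ ≤ ∑ i ∈ Finset.Ico k ! (k + 1)!, factorialWeight N i := by
        rw [← hcard]
        exact Finset.card_nsmul_le_sum _ _ _ fun i hi =>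
          le_factorialWeight N (Finset.mem_Ico.1 hi).2

theorem le_sum_factorialWeight (N k : ℕ) :
    (k * (k + 1) / 2 : ℝ) ≤ ∑ i ∈ Finset.Ico 1 (k + 1)!, factorialWeight N i := by
  induction k with
  | zero => simp
  | succ k ih =>
    rw [← Finset.sum_Ico_consecutive _ (Nat.factorial_pos (k + 1))
      (Nat.factorial_le (Nat.le_succ (k + 1)))]
    have hblock := le_sum_factorialWeight_block N (k + 1)
    push_cast at hblock ⊢
    linarith

theorem sum_factorialWeight_le_one {A : Finset ℕ} (hA : A ∈ FF)
    (hAN : A ⊆ Finset.range (N + 1)!) : ∑ j ∈ A, factorialWeight N (j + 1) ≤ 1 := by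
  obtain ⟨m, -, hcard, hmin⟩ := hA
  rcases le_or_gt m N with hm | hm
  · calc ∑ j ∈ A, factorialWeight N (j + 1) ≤ A.card • (m ! : ℝ)⁻¹ :=
          Finset.sum_le_card_nsmul _ _ _ fun j hj => factorialWeight_le hm (hmin j hj)
      _ ≤ 1 := by
          rw [nsmul_eq_mul, ← div_eq_mul_inv, div_le_one (by positivity)]
          exact_mod_cast hcard
  · have hlast : ∀ j ∈ A, j + 1 = (N + 1)! := fun j hj =>
      le_antisymm (Finset.mem_range.1 (hAN hj)) ((Nat.factorial_le hm).trans (hmin j hj))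
    have hcard_le : A.card ≤ 1 := Finset.card_le_one.2 fun j hj l hl =>
      Nat.succ_injective ((hlast j hj).trans (hlast l hl).symm)
    calc ∑ j ∈ A, factorialWeight N (j + 1) ≤ A.card • (1 : ℝ) :=
          Finset.sum_le_card_nsmul _ _ _ fun j _ => factorialWeight_le_one N (j + 1)
      _ ≤ 1 := by
          rw [nsmul_one]
          exact_mod_cast hcard_le

theorem succ_le_sum_range_factorialWeight (N : ℕ) :
    (N + 1 : ℝ) ≤ ∑ j ∈ Finset.range (N + 1)!, factorialWeight N (j + 1) := by
  rw [Finset.range_eq_Ico, Finset.sum_Ico_add', zero_add,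
    Finset.sum_Ico_succ_top (Nat.factorial_pos (N + 1))]
  refine le_trans ?_ (add_le_add (le_sum_factorialWeight N N)
    (inv_factorial_le_factorialWeight N (N + 1)!))
  obtain rfl | rfl | hN : N = 0 ∨ N = 1 ∨ 2 ≤ N := by omega
  · norm_num
  · norm_num
  · have hN' : (2 : ℝ) ≤ N := by exact_mod_cast hN
    have hpos : (0 : ℝ) ≤ (N ! : ℝ)⁻¹ := by positivity
    nlinarith

theorem le_dualNormF_indF_range_factorial (n : ℕ) :
    (n : ℝ) ≤ dualNormF (indF (Finset.range n !)) := by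
  cases n with
  | zero =>
    rw [Nat.cast_zero]
    exact zero_le_one.trans (one_le_dualNormF_indF (by simp))
  | succ N =>
    let y := Finsupp.indicator (Finset.range (N + 1)!) fun j _ => factorialWeight N (j + 1)
    have hy : normF y ≤ 1 := normF_indicator_le fun A hA hAN => by
      simpa only [abs_of_nonneg (factorialWeight_nonneg N _)] using
        sum_factorialWeight_le_one hA hAN
    calc ((N + 1 : ℕ) : ℝ) ≤ ∑ j ∈ Finset.range (N + 1)!, factorialWeight N (j + 1) := by
          exact_mod_cast succ_le_sum_range_factorialWeight N
      _ = pairF (indF (Finset.range (N + 1)!)) y := by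
          rw [pairF_indF]
          exact Finset.sum_congr rfl fun j hj => by rw [Finsupp.indicator_of_mem hj]
      _ ≤ _ := pairF_le_dualNormF _ hy

end FactorialWeight

theorem not_democratic_dualNormF :
    ¬ ∃ Γ : ℝ, ∀ A B : Finset ℕ, A.card ≤ B.card →
      dualNormF (indF A) ≤ Γ * dualNormF (indF B) := by
  rintro ⟨Γ, hΓ⟩
  obtain ⟨n, hn⟩ := exists_nat_gt Γ
  have hcard : (Finset.range (n + 1).factorial).card ≤
      (Finset.Ico (n + 1).factorial (2 * (n + 1).factorial)).card := by
    rw [Finset.card_range, Nat.card_Ico]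
    omega
  have hle := hΓ _ _ hcard
  rw [dualNormF_indF_Ico_factorial n.succ_pos, mul_one] at hle
  have hge := le_dualNormF_indF_range_factorial (n + 1)
  push_cast at hge
  linarith

/-- For the dual norm of `normF`: (i) spreading a functional to the
right does not increase its dual norm (if `n` is strictly monotone, so `i ≤ n i`, then
`‖∑ a_i e_{n_i}^*‖* ≤ ‖∑ a_i e_i^*‖*`); consequently the dual system is reverse
conservative with constant `1`; (ii) `‖∑_{i=1}^{n!} e_i^*‖* ≥ n` and
`‖∑_{i=n!+1}^{2n!} e_i^*‖* = 1` for all `n ≥ 1` (paper indexing, shifted down by one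
here), so the dual system is not democratic. -/
theorem stmt_3 :
    (∀ (a : ℕ →₀ ℝ) (n : ℕ → ℕ) (hn : StrictMono n) (_ : ∀ i : ℕ, i ≤ n i),
      dualNormF (Finsupp.embDomain ⟨n, hn.injective⟩ a) ≤ dualNormF a) ∧
    (∀ A B : Finset ℕ, A.card ≤ B.card → (∀ i ∈ B, ∀ j ∈ A, i < j) →
      dualNormF (indF A) ≤ dualNormF (indF B)) ∧
    (∀ n : ℕ, 1 ≤ n →
      (n : ℝ) ≤ dualNormF (indF (Finset.range n.factorial)) ∧
      dualNormF (indF (Finset.Ico n.factorial (2 * n.factorial))) = 1) ∧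
    ¬ ∃ Γ : ℝ, ∀ A B : Finset ℕ, A.card ≤ B.card →
        dualNormF (indF A) ≤ Γ * dualNormF (indF B) := by
  refine ⟨fun a n hn h => ?_, fun A B hcard hlt => ?_, fun n hn => ⟨?_, ?_⟩, ?_⟩
  · rw [Finsupp.embDomain_eq_mapDomain]
    exact dualNormF_mapDomain_le hn.injective.injOn fun i _ => h i
  · exact dualNormF_indF_le_of_forall_le hcard fun i hi j hj => (hlt i hi j hj).le
  · exact le_dualNormF_indF_range_factorial n
  · exact dualNormF_indF_Ico_factorial hn
  · exact not_democratic_dualNormF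
end
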